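/- In the Melikian algebra M over a field of characteristic 5, the squaring cocycle of ad(1) (with 1 ∈ M_{−2}) satisfies Sq(1)(x_i, x_ix_j²D_i) = 2D_i and Sq(1)(x_i, x_j³D_j) = D_i for i ≠ j, while for every 1-cochain g homogeneous of degree −10 one has dg(x_i, x_ix_j²D_i) = dg(x_i, x_j³D_j) = −g(x_ix_j²); hence [Sq(1)] ≠ 0 in H²(M,M). -/

import Mathlib

open scoped BigOperators

namespace Melikian

/-- Index set for monomials in the truncated polynomial algebra
`A(2) = F[x₁,x₂]/(x₁⁵,x₂⁵)`. -/
abbrev Idx : Type := Fin 5 × Fin 5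

/-- The truncated polynomial algebra `A(2)`, as functions on monomial exponents. -/
abbrev A (F : Type*) [Field F] : Type _ := Idx → F

variable {F : Type*} [Field F]

/-- The monomial `x^b = x₁^{b₁} x₂^{b₂}`. -/
def X (b : Idx) : A F := fun a => if a = b then 1 else 0

/-- Truncated multiplication of `A(2)`. -/
def mulA (f g : A F) : A F := fun a =>
  ∑ b : Idx, ∑ c : Idx,
    if b.1.val + c.1.val = a.1.val ∧ b.2.val + c.2.val = a.2.val then f b * g c else 0

/-- Partial derivative `∂/∂x₁` on `A(2)`. -/
def d1 (f : A F) : A F := fun a =>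
  if h : a.1.val + 1 < 5 then ((a.1.val + 1 : ℕ) : F) * f (⟨a.1.val + 1, h⟩, a.2) else 0

/-- Partial derivative `∂/∂x₂` on `A(2)`. -/
def d2 (f : A F) : A F := fun a =>
  if h : a.2.val + 1 < 5 then ((a.2.val + 1 : ℕ) : F) * f (a.1, ⟨a.2.val + 1, h⟩) else 0

/-- The Witt–Jacobson algebra `W(2)` as a free `A(2)`-module with basis `D₁, D₂`:
an element `(f₁, f₂)` stands for `f₁D₁ + f₂D₂`. -/
abbrev W (F : Type*) [Field F] : Type _ := A F × A F

/-- Action of a derivation `D = f₁D₁+f₂D₂ ∈ W(2)` on `A(2)`. -/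
def Dw (D : W F) (g : A F) : A F := mulA D.1 (d1 g) + mulA D.2 (d2 g)

/-- Divergence `div(f₁D₁+f₂D₂) = D₁(f₁) + D₂(f₂)`. -/
def divW (D : W F) : A F := d1 D.1 + d2 D.2

/-- The usual bracket of `W(2)`. -/
def brW (D E : W F) : W F := (Dw D E.1 - Dw E D.1, Dw D E.2 - Dw E D.2)

/-- Multiplication of an element of `W(2)` by a truncated polynomial. -/
def smulA (f : A F) (D : W F) : W F := (mulA f D.1, mulA f D.2)

/-- The Melikian algebra `M = A(2) ⊕ W(2) ⊕ W(2)~` as an `F`-vector space. -/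
abbrev Mel (F : Type*) [Field F] : Type _ := A F × W F × W F

/-- Inclusion of `A(2)` into `M`. -/
def ιA (f : A F) : Mel F := (f, 0, 0)

/-- Inclusion of `W(2)` into `M`. -/
def ιW (D : W F) : Mel F := (0, D, 0)

/-- Inclusion of the second copy `W(2)~` into `M`, `D ↦ D̃`. -/
def ιT (D : W F) : Mel F := (0, 0, D)

/-- The Melikian bracket on `M = A(2) ⊕ W(2) ⊕ W(2)~`, defined by the rules
`[D,Ẽ] = [D,E]~ + 2 div(D) Ẽ`, `[D,f] = D(f) − 2 div(D) f`,
`[f₁D̃₁+f₂D̃₂, g₁D̃₁+g₂D̃₂] = f₁g₂ − f₂g₁`, `[f,Ẽ] = fE`,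
`[f,g] = 2(gD₂(f) − fD₂(g))D̃₁ + 2(fD₁(g) − gD₁(f))D̃₂`,
extended bilinearly and antisymmetrically (with the standard bracket on `W(2)`). -/
def brM (u v : Mel F) : Mel F :=
  ( (Dw u.2.1 v.1 - (2 : F) • mulA (divW u.2.1) v.1)
      - (Dw v.2.1 u.1 - (2 : F) • mulA (divW v.2.1) u.1)
      + (mulA u.2.2.1 v.2.2.2 - mulA u.2.2.2 v.2.2.1)
  , brW u.2.1 v.2.1 + smulA u.1 v.2.2 - smulA v.1 u.2.2
  , (brW u.2.1 v.2.2 + (2 : F) • smulA (divW u.2.1) v.2.2)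
      - (brW v.2.1 u.2.2 + (2 : F) • smulA (divW v.2.1) u.2.2)
      + ((2 : F) • (mulA v.1 (d2 u.1) - mulA u.1 (d2 v.1)),
         (2 : F) • (mulA u.1 (d1 v.1) - mulA v.1 (d1 u.1))) )

/-- `x^b D_i` as an element of `W(2)` (`i = 0` stands for `D₁`, `i = 1` for `D₂`). -/
def wOf (i : Fin 2) (b : Idx) : W F := if i = 0 then (X b, 0) else (0, X b)

/-- The element `x₁D₁ ∈ M`. -/
def x1D1 : Mel F := ιW (X (1, 0), 0)

/-- The element `x₂D₂ ∈ M`. -/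
def x2D2 : Mel F := ιW (0, X (0, 1))

/-- The element `1 ∈ A(2) ⊂ M`. -/
def oneM : Mel F := ιA (X (0, 0))

/-- The element `D_{i+1} ∈ W(2) ⊂ M`. -/
def DD (i : Fin 2) : Mel F := ιW (wOf i (0, 0))

/-- The element `D̃_{i+1} ∈ W(2)~ ⊂ M`. -/
def TT (i : Fin 2) : Mel F := ιT (wOf i (0, 0))

/-- Total degree of a monomial exponent. -/
def degA (b : Idx) : ℤ := (b.1.val : ℤ) + (b.2.val : ℤ)

/-- The degree-`d` piece `M_d` of the `ℤ`-grading of the Melikian algebra: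
`deg_M(f) = 3 deg(f) − 2` on `A(2)`, `deg_M(x^bD_i) = 3(|b|−1)` on `W(2)`, and
`deg_M(x^bD̃_i) = 3(|b|−1)+2` on `W(2)~`. -/
def Md (d : ℤ) : Submodule F (Mel F) :=
  Submodule.span F
    ( {m | ∃ b : Idx, m = ιA (X b) ∧ d = 3 * degA b - 2}
      ∪ {m | ∃ b : Idx, ∃ i : Fin 2, m = ιW (wOf i b) ∧ d = 3 * (degA b - 1)}
      ∪ {m | ∃ b : Idx, ∃ i : Fin 2, m = ιT (wOf i b) ∧ d = 3 * (degA b - 1) + 2} )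

/-- The part `M_{≥ d}` of the Melikian algebra. -/
def Mge (d : ℤ) : Submodule F (Mel F) := ⨆ e : ℤ, ⨆ _ : d ≤ e, (Md e : Submodule F (Mel F))

/-- The squaring `Sq(γ)(x,y) = Σ_{k=1}^{4} [γ^k(x), γ^{5−k}(y)] / (k!(5−k)!)`
of an operator `γ` on the Melikian algebra (characteristic 5). -/
def melSq (γ : Mel F → Mel F) (x y : Mel F) : Mel F :=
  ∑ k ∈ Finset.Icc 1 4,
    ((Nat.factorial k * Nat.factorial (5 - k) : ℕ) : F)⁻¹ • brM (γ^[k] x) (γ^[5 - k] y)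

/-- The Chevalley–Eilenberg coboundary of a linear 1-cochain of `M` with values in the
adjoint representation. -/
def cob (g : Mel F →ₗ[F] Mel F) (x y : Mel F) : Mel F :=
  brM x (g y) - brM y (g x) - g (brM x y)


section Computation

theorem mulA_X_X {b c d : Idx} (h₁ : b.1.val + c.1.val = d.1.val)
    (h₂ : b.2.val + c.2.val = d.2.val) : mulA (X b : A F) (X c) = X d := by
  funext a
  unfold mulA
  rw [Finset.sum_eq_single b (by
    intro b' _ hb
    exact Finset.sum_eq_zero fun c' _ => by simp [X, hb]) (by simp),
    Finset.sum_eq_single c (by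
    intro c' _ hc
    simp [X, hc]) (by simp), h₁, h₂]
  simp [X, Prod.ext_iff, Fin.ext_iff, eq_comm]

theorem mulA_comm (f g : A F) : mulA f g = mulA g f := by
  funext a
  unfold mulA
  rw [Finset.sum_comm]
  refine Finset.sum_congr rfl fun c _ => Finset.sum_congr rfl fun b _ => ?_
  rw [add_comm b.1.val, add_comm b.2.val, mul_comm]

@[simp]
theorem one_mulA (g : A F) : mulA (X (0, 0)) g = g := by
  funext a
  unfold mulA
  rw [Finset.sum_eq_single (0, 0) (by
    intro b _ hb
    exact Finset.sum_eq_zero fun c _ => by simp [X, hb]) (by simp),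
    Finset.sum_eq_single a (by
    intro c _ hc
    refine if_neg fun h => hc ?_
    ext
    · simpa using h.1
    · simpa using h.2) (by simp)]
  simp [X]

@[simp]
theorem mulA_one (g : A F) : mulA g (X (0, 0)) = g := by rw [mulA_comm, one_mulA]

@[simp]
theorem zero_mulA (g : A F) : mulA 0 g = 0 := by funext a; simp [mulA]

@[simp]
theorem mulA_zero (g : A F) : mulA g 0 = 0 := by funext a; simp [mulA]

@[simp]
theorem smul_mulA (r : F) (f g : A F) : mulA (r • f) g = r • mulA f g := by
  funext a
  simp only [mulA, Pi.smul_apply, smul_eq_mul, Finset.mul_sum, mul_ite, mul_zero, mul_assoc]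

@[simp]
theorem mulA_smul (r : F) (f g : A F) : mulA f (r • g) = r • mulA f g := by
  rw [mulA_comm, smul_mulA, mulA_comm]

@[simp]
theorem neg_mulA (f g : A F) : mulA (-f) g = -mulA f g := by
  simpa using smul_mulA (-1) f g

@[simp]
theorem mulA_neg (f g : A F) : mulA f (-g) = -mulA f g := by
  simpa using mulA_smul (-1) f g

theorem mulA_apply_zero (f g : A F) : mulA f g (0, 0) = f (0, 0) * g (0, 0) := by
  unfold mulA
  rw [Finset.sum_eq_single (0, 0) (by
    intro b _ hb
    refine Finset.sum_eq_zero fun c _ => if_neg fun h => hb ?_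
    ext <;> simp at h ⊢ <;> tauto) (by simp),
    Finset.sum_eq_single (0, 0) (by
    intro c _ hc
    refine if_neg fun h => hc ?_
    ext <;> simp at h ⊢ <;> tauto) (by simp)]
  simp

@[simp]
theorem d1_zero : d1 (0 : A F) = 0 := by funext a; simp [d1]

@[simp]
theorem d2_zero : d2 (0 : A F) = 0 := by funext a; simp [d2]

@[simp]
theorem d1_smul (r : F) (f : A F) : d1 (r • f) = r • d1 f := by
  funext a
  simp only [d1, Pi.smul_apply, smul_eq_mul]
  split_ifs <;> ring

@[simp]
theorem d2_smul (r : F) (f : A F) : d2 (r • f) = r • d2 f := by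
  funext a
  simp only [d2, Pi.smul_apply, smul_eq_mul]
  split_ifs <;> ring

@[simp]
theorem d1_neg (f : A F) : d1 (-f) = -d1 f := by
  simpa using d1_smul (-1) f

@[simp]
theorem d2_neg (f : A F) : d2 (-f) = -d2 f := by
  simpa using d2_smul (-1) f

@[simp]
theorem d1_X (i j : Fin 5) : d1 (X (i, j) : A F) = (i.val : F) • X (i - 1, j) := by
  funext ⟨a, c⟩
  fin_cases i <;> fin_cases a <;> simp [d1, X]

@[simp]
theorem d2_X (i j : Fin 5) : d2 (X (i, j) : A F) = (j.val : F) • X (i, j - 1) := by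
  funext ⟨a, c⟩
  fin_cases j <;> fin_cases c <;> simp [d2, X]

@[simp]
theorem brM_zero_right (u : Mel F) : brM u 0 = 0 := by
  simp [brM, Dw, divW, brW, smulA]

/-- The action of `ad(1)` on the three summands of `M`. -/
theorem brM_oneM (u : Mel F) :
    brM oneM u = ((2 : F) • divW u.2.1, u.2.2, ((-2 : F) • d2 u.1, (2 : F) • d1 u.1)) := by
  simp [brM, oneM, ιA, Dw, divW, brW, smulA]

theorem Md_eq_bot {d : ℤ} (hd : d < -3) : (Md d : Submodule F (Mel F)) = ⊥ := by
  have hdeg (b : Idx) : 0 ≤ degA b := by unfold degA; positivity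
  rw [Md, Submodule.span_eq_bot]
  rintro m ((⟨b, -, h⟩ | ⟨b, i, -, h⟩) | ⟨b, i, -, h⟩) <;> have := hdeg b <;> omega

theorem brM_ιA_fst_coeff {f : A F} (hf : f (0, 0) = 0) (v : Mel F) :
    (brM (ιA f) v).2.1.1 (0, 0) = 0 := by
  simp [brM, ιA, brW, Dw, smulA, mulA_apply_zero, hf]

theorem brM_ιW_fst_coeff {D : W F} (h₁ : D.1 (0, 0) = 0) (h₂ : D.2 (0, 0) = 0)
    (h₁' : d1 D.1 (0, 0) = 0) (h₂' : d2 D.1 (0, 0) = 0) (v : Mel F) :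
    (brM (ιW D) v).2.1.1 (0, 0) = 0 := by
  simp [brM, ιW, brW, Dw, smulA, mulA_apply_zero, h₁, h₂, h₁', h₂']

theorem cob_fst_coeff (g : Mel F →ₗ[F] Mel F) {f : A F} {D : W F} (hf : f (0, 0) = 0)
    (h₁ : D.1 (0, 0) = 0) (h₂ : D.2 (0, 0) = 0)
    (h₁' : d1 D.1 (0, 0) = 0) (h₂' : d2 D.1 (0, 0) = 0) :
    (cob g (ιA f) (ιW D)).2.1.1 (0, 0) = -(g (brM (ιA f) (ιW D))).2.1.1 (0, 0) := by
  simp [cob, brM_ιA_fst_coeff hf, brM_ιW_fst_coeff h₁ h₂ h₁' h₂']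

theorem cob_of_apply_eq_zero (g : Mel F →ₗ[F] Mel F) {x y : Mel F} (hx : g x = 0) (hy : g y = 0) :
    cob g x y = -g (brM x y) := by
  simp [cob, hx, hy]

theorem ιA_X_mem_Md (b : Idx) : (ιA (X b) : Mel F) ∈ Md (3 * degA b - 2) :=
  Submodule.subset_span (.inl (.inl ⟨b, rfl, rfl⟩))

theorem ιW_wOf_mem_Md (i : Fin 2) (b : Idx) : (ιW (wOf i b) : Mel F) ∈ Md (3 * (degA b - 1)) :=
  Submodule.subset_span (.inl (.inr ⟨b, i, rfl, rfl⟩))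

theorem cob_of_homogeneous (g : Mel F →ₗ[F] Mel F)
    (hg : ∀ (d : ℤ) (x : Mel F), x ∈ Md d → g x ∈ Md (d - 10)) (b c : Idx) (i : Fin 2)
    (hb : degA b < 3) (hc : degA c < 4) :
    cob g (ιA (X b)) (ιW (wOf i c)) = -g (brM (ιA (X b)) (ιW (wOf i c))) := by
  apply cob_of_apply_eq_zero
  · simpa [Md_eq_bot (F := F) (show 3 * degA b - 2 - 10 < -3 by omega)] using
      hg _ _ (ιA_X_mem_Md b)
  · simpa [Md_eq_bot (F := F) (show 3 * (degA c - 1) - 10 < -3 by omega)] using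
      hg _ _ (ιW_wOf_mem_Md i c)

theorem five_eq_zero [CharP F 5] : (5 : F) = 0 := by
  exact_mod_cast CharP.cast_eq_zero F 5

theorem melSq_eq [CharP F 5] (γ : Mel F → Mel F) (x y : Mel F) :
    melSq γ x y = -brM (γ x) (γ (γ (γ (γ y)))) + (3 : F) • brM (γ (γ x)) (γ (γ (γ y)))
      + (3 : F) • brM (γ (γ (γ x))) (γ (γ y)) - brM (γ (γ (γ (γ x)))) (γ y) := by
  have h24 : (24 : F)⁻¹ = -1 :=
    inv_eq_of_mul_eq_one_right (by linear_combination -5 * five_eq_zero (F := F))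
  have h12 : (6 : F)⁻¹ * 2⁻¹ = 3 := by
    rw [← mul_inv]
    exact inv_eq_of_mul_eq_one_right (by linear_combination 7 * five_eq_zero (F := F))
  have h12' : (2 : F)⁻¹ * 6⁻¹ = 3 := by rw [mul_comm, h12]
  simp [melSq, show Finset.Icc 1 4 = ({1, 2, 3, 4} : Finset ℕ) by decide, Nat.factorial, h24,
    h12, h12']
  module

theorem brM_x1_x1x2sqD1 :
    brM (ιA (X (1, 0)) : Mel F) (ιW (X (1, 2), 0)) = ιA (X (1, 2)) := by
  have hX : mulA (X (0, 2) : A F) (X (1, 0)) = X (1, 2) := mulA_X_X rfl rfl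
  simp [brM, ιA, ιW, Dw, divW, brW, smulA, hX]
  match_scalars
  norm_num

theorem brM_x1_x2cubeD2 [CharP F 5] :
    brM (ιA (X (1, 0)) : Mel F) (ιW (0, X (0, 3))) = ιA (X (1, 2)) := by
  have hX : mulA (X (0, 2) : A F) (X (1, 0)) = X (1, 2) := mulA_X_X rfl rfl
  simp [brM, ιA, ιW, Dw, divW, brW, smulA, hX]
  match_scalars
  linear_combination five_eq_zero (F := F)

theorem brM_x2_x1sqx2D2 :
    brM (ιA (X (0, 1)) : Mel F) (ιW (0, X (2, 1))) = ιA (X (2, 1)) := by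
  have hX : mulA (X (2, 0) : A F) (X (0, 1)) = X (2, 1) := mulA_X_X rfl rfl
  simp [brM, ιA, ιW, Dw, divW, brW, smulA, hX]
  match_scalars
  norm_num

theorem brM_x2_x1cubeD1 [CharP F 5] :
    brM (ιA (X (0, 1)) : Mel F) (ιW (X (3, 0), 0)) = ιA (X (2, 1)) := by
  have hX : mulA (X (2, 0) : A F) (X (0, 1)) = X (2, 1) := mulA_X_X rfl rfl
  simp [brM, ιA, ιW, Dw, divW, brW, smulA, hX]
  match_scalars
  linear_combination five_eq_zero (F := F)

theorem melSq_x1_x1x2sqD1 [CharP F 5] :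
    melSq (brM (oneM : Mel F)) (ιA (X (1, 0))) (ιW (X (1, 2), 0)) = (2 : F) • DD 0 := by
  simp only [melSq_eq, brM_oneM]
  simp [ιA, ιW, divW, brM, brW, Dw, smulA, DD, wOf]
  match_scalars
  linear_combination -10 * five_eq_zero (F := F)

theorem melSq_x1_x2cubeD2 [CharP F 5] :
    melSq (brM (oneM : Mel F)) (ιA (X (1, 0))) (ιW (0, X (0, 3))) = DD 0 := by
  simp only [melSq_eq, brM_oneM]
  simp [ιA, ιW, divW, brM, brW, Dw, smulA, DD, wOf]
  match_scalars
  linear_combination -29 * five_eq_zero (F := F)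

theorem melSq_x2_x1sqx2D2 [CharP F 5] :
    melSq (brM (oneM : Mel F)) (ιA (X (0, 1))) (ιW (0, X (2, 1))) = (2 : F) • DD 1 := by
  simp only [melSq_eq, brM_oneM]
  simp [ιA, ιW, divW, brM, brW, Dw, smulA, DD, wOf]
  match_scalars
  linear_combination -10 * five_eq_zero (F := F)

theorem melSq_x2_x1cubeD1 [CharP F 5] :
    melSq (brM (oneM : Mel F)) (ιA (X (0, 1))) (ιW (X (3, 0), 0)) = DD 1 := by
  simp only [melSq_eq, brM_oneM]
  simp [ιA, ιW, divW, brM, brW, Dw, smulA, DD, wOf]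
  match_scalars
  linear_combination -29 * five_eq_zero (F := F)

end Computation

/-- In the Melikian algebra over a field of characteristic 5, the squaring cocycle of
`ad(1)` satisfies `Sq(1)(x_i, x_ix_j²D_i) = 2D_i` and `Sq(1)(x_i, x_j³D_j) = D_i`
for `i ≠ j`, while every `1`-cochain `g` homogeneous of degree `−10` has coboundary
`dg(x_i, x_ix_j²D_i) = dg(x_i, x_j³D_j) = −g(x_ix_j²)`; hence `[Sq(1)] ≠ 0` in
`H²(M, M)`. -/
theorem melikian_sq_one_nonzero (F : Type*) [Field F] [CharP F 5] :
    melSq (brM (oneM : Mel F)) (ιA (X (1, 0))) (ιW (X (1, 2), 0)) = (2 : F) • DD 0 ∧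
    melSq (brM (oneM : Mel F)) (ιA (X (1, 0))) (ιW (0, X (0, 3))) = DD 0 ∧
    melSq (brM (oneM : Mel F)) (ιA (X (0, 1))) (ιW (0, X (2, 1))) = (2 : F) • DD 1 ∧
    melSq (brM (oneM : Mel F)) (ιA (X (0, 1))) (ιW (X (3, 0), 0)) = DD 1 ∧
    (∀ g : Mel F →ₗ[F] Mel F,
      (∀ (d : ℤ) (x : Mel F), x ∈ Md d → g x ∈ Md (d - 10)) →
      cob g (ιA (X (1, 0))) (ιW (X (1, 2), 0)) = - g (ιA (X (1, 2))) ∧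
      cob g (ιA (X (1, 0))) (ιW (0, X (0, 3))) = - g (ιA (X (1, 2))) ∧
      cob g (ιA (X (0, 1))) (ιW (0, X (2, 1))) = - g (ιA (X (2, 1))) ∧
      cob g (ιA (X (0, 1))) (ιW (X (3, 0), 0)) = - g (ιA (X (2, 1)))) ∧
    ¬ ∃ g : Mel F →ₗ[F] Mel F, ∀ x y : Mel F, melSq (brM oneM) x y = cob g x y := by
  refine ⟨melSq_x1_x1x2sqD1, melSq_x1_x2cubeD2, melSq_x2_x1sqx2D2, melSq_x2_x1cubeD1,
    fun g hg => ⟨?_, ?_, ?_, ?_⟩, ?_⟩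
  · rw [← brM_x1_x1x2sqD1]
    exact cob_of_homogeneous g hg (1, 0) (1, 2) 0 (by decide) (by decide)
  · rw [← brM_x1_x2cubeD2]
    exact cob_of_homogeneous g hg (1, 0) (0, 3) 1 (by decide) (by decide)
  · rw [← brM_x2_x1sqx2D2]
    exact cob_of_homogeneous g hg (0, 1) (2, 1) 1 (by decide) (by decide)
  · rw [← brM_x2_x1cubeD1]
    exact cob_of_homogeneous g hg (0, 1) (3, 0) 0 (by decide) (by decide)
  · rintro ⟨g, hg⟩
    have h₁ := cob_fst_coeff g (f := X (1, 0)) (D := (X (1, 2), 0))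
      (by simp [X]) (by simp [X]) (by simp) (by simp [X]) (by simp [X])
    have h₂ := cob_fst_coeff g (f := X (1, 0)) (D := (0, X (0, 3)))
      (by simp [X]) (by simp) (by simp [X]) (by simp) (by simp)
    rw [← hg, melSq_x1_x1x2sqD1, brM_x1_x1x2sqD1] at h₁
    rw [← hg, melSq_x1_x2cubeD2, brM_x1_x2cubeD2, ← h₁] at h₂
    have h : (1 : F) = 2 := by simpa [DD, ιW, wOf, X] using h₂
    exact one_ne_zero (by linear_combination -h : (1 : F) = 0)

end Melikian
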